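/- arXiv:2405.05088 — 6 statements merged into one kernel-verified Lean document; each statement's English description precedes it below -/
import Mathlib

section
/- Let G and H be finitely presented groups, let K be a finitely generated group, and let φ : K →* G and ψ : K →* H be group homomorphisms. Then the amalgamated free product of G and H over K (the pushout of φ and ψ in the category of groups) is finitely presented. -/
/-- A group `G` is finitely presented if it is isomorphic to a group presented
by finitely many generators and finitely many relators. -/
def IsFinitelyPresented (G : Type*) [Group G] : Prop :=
  ∃ (n : ℕ) (R : Set (FreeGroup (Fin n))), R.Finite ∧ Nonempty (G ≃* PresentedGroup R)

/-- The amalgamated free product (pushout) of `φ : K →* G` and `ψ : K →* H`: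
the quotient of the free product `G * H` by the relations `φ k = ψ k` for all
`k : K`. -/
def AmalgamatedFreeProduct {K G H : Type*} [Group K] [Group G] [Group H]
    (φ : K →* G) (ψ : K →* H) : Type _ :=
  Monoid.Coprod G H ⧸ Subgroup.normalClosure
    {w | ∃ k : K, w = Monoid.Coprod.inl (φ k) * (Monoid.Coprod.inr (ψ k))⁻¹}

instance {K G H : Type*} [Group K] [Group G] [Group H] (φ : K →* G) (ψ : K →* H) :
    Group (AmalgamatedFreeProduct φ ψ) :=
  QuotientGroup.Quotient.group _

/-- The frozen notion of finite presentability implies the one of Mathlib. -/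
theorem mathlib_fp_of_fp {G : Type*} [Group G] (h : IsFinitelyPresented G) :
    Group.IsFinitelyPresented G := by
  obtain ⟨n, R, hR, ⟨e⟩⟩ := h
  have : Finite R := hR
  exact Group.IsFinitelyPresented.equiv e.symm

/-- The amalgamation relators are normally generated by those of a finite generating set. -/
theorem amalgam_relators_fg {K G H : Type*} [Group K] [Group G] [Group H] (hK : Group.FG K)
    (φ : K →* G) (ψ : K →* H) :
    (Subgroup.normalClosure {w : Monoid.Coprod G H | ∃ k : K,
      w = Monoid.Coprod.inl (φ k) *
        (Monoid.Coprod.inr (ψ k))⁻¹}).IsFinitelyNormallyGenerated := by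
  obtain ⟨S, hS, hfin⟩ := Group.fg_iff.mp hK
  let r : K → Monoid.Coprod G H := fun k =>
    Monoid.Coprod.inl (φ k) * (Monoid.Coprod.inr (ψ k))⁻¹
  refine ⟨r '' S, hfin.image _, le_antisymm ?_ ?_⟩
  · apply Subgroup.normalClosure_mono
    rintro _ ⟨k, _, rfl⟩
    exact ⟨k, rfl⟩
  · apply Subgroup.normalClosure_le_normal
    rintro _ ⟨k, rfl⟩
    let N := Subgroup.normalClosure (r '' S)
    let q := QuotientGroup.mk' N
    have key : (q.comp Monoid.Coprod.inl).comp φ = (q.comp Monoid.Coprod.inr).comp ψ := by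
      refine MonoidHom.eq_of_eqOn_dense hS ?_
      intro s hs
      have h1 : q (r s) = 1 :=
        (QuotientGroup.eq_one_iff (N := N) _).mpr
          (Subgroup.subset_normalClosure ⟨s, hs, rfl⟩)
      simp only [r, map_mul, map_inv] at h1
      exact mul_inv_eq_one.mp h1
    have h2 := DFunLike.congr_fun key k
    apply (QuotientGroup.eq_one_iff (N := N) _).mp
    change q _ = 1
    rw [map_mul, map_inv]
    exact mul_inv_eq_one.mpr h2

/-- If `G` and `H` are finitely presented and `K` is finitely generated, then
the amalgamated free product of `G` and `H` over `K` is finitely presented. -/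
theorem amalgamatedFreeProduct_finitelyPresented
    {K G H : Type*} [Group K] [Group G] [Group H]
    (hG : IsFinitelyPresented G) (hH : IsFinitelyPresented H) (hK : Group.FG K)
    (φ : K →* G) (ψ : K →* H) :
    IsFinitelyPresented (AmalgamatedFreeProduct φ ψ) := by
  have := mathlib_fp_of_fp hG
  have := mathlib_fp_of_fp hH
  have : Group.IsFinitelyPresented (AmalgamatedFreeProduct φ ψ) :=
    Group.IsFinitelyPresented.quotient _ (amalgam_relators_fg hK φ ψ)
  exact Group.IsFinitelyPresented.exists_mulEquiv_presentedGroup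
end

section
/- Let G be a finitely presented group, let A and B be subgroups of G with A finitely generated, and let φ : A ≃* B be an isomorphism. Then the HNN extension HNNExtension G A B φ is finitely presented. -/
/-- If `G` is finitely presented, `A` and `B` are subgroups of `G` with `A`
finitely generated, and `φ : A ≃* B`, then the HNN extension
`HNNExtension G A B φ` is finitely presented. -/
theorem hnnExtension_finitelyPresented (G : Type*) [Group G]
    (hG : IsFinitelyPresented G) (A B : Subgroup G) (hA : A.FG) (φ : A ≃* B) :
    IsFinitelyPresented (HNNExtension G A B φ) := by
  obtain ⟨n, R, hR, ⟨e⟩⟩ := hG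
  obtain ⟨S, hS⟩ := ((Group.fg_iff_subgroup_fg A).2 hA).1
  let π : FreeGroup (Fin n) →* G := e.symm.toMonoidHom.comp (PresentedGroup.mk R)
  have hπ : Function.Surjective π :=
    e.symm.surjective.comp (PresentedGroup.mk_surjective R)
  obtain ⟨σ, hσ⟩ := hπ.hasRightInverse
  let ι : FreeGroup (Fin n) →* FreeGroup (Fin (n + 1)) := FreeGroup.map Fin.castSucc
  let τ : FreeGroup (Fin (n + 1)) := FreeGroup.of (Fin.last n)
  let rel : A → FreeGroup (Fin (n + 1)) := fun a =>
    τ * ι (σ a) * τ⁻¹ * (ι (σ (φ a : G)))⁻¹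
  let Q : Set (FreeGroup (Fin (n + 1))) := ι '' R ∪ rel '' (S : Set A)
  have hRQ : R.MapsTo ι Q := fun r hr => Or.inl ⟨r, hr, rfl⟩
  let fG : G →* PresentedGroup Q := (PresentedGroup.map ι hRQ).comp e.toMonoidHom
  have hfG : ∀ w, fG (π w) = PresentedGroup.mk Q (ι w) := by
    intro w
    change PresentedGroup.map ι hRQ (e (e.symm (PresentedGroup.mk R w))) = _
    rw [e.apply_symm_apply]
    rfl
  have hfσ : ∀ g, PresentedGroup.mk Q (ι (σ g)) = fG g := by
    intro g
    rw [← hfG, hσ g]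
  let x : PresentedGroup Q := PresentedGroup.mk Q τ
  have hhom : ((MulAut.conj x).toMonoidHom.comp fG).comp A.subtype
      = (fG.comp B.subtype).comp φ.toMonoidHom := by
    refine MonoidHom.eq_of_eqOn_dense hS ?_
    intro a ha
    have h1 : PresentedGroup.mk Q (rel a) = 1 :=
      PresentedGroup.one_of_mem (Or.inr ⟨a, ha, rfl⟩)
    simp only [rel, map_mul, map_inv, hfσ] at h1
    exact mul_inv_eq_one.1 h1
  have hx : ∀ a : A, x * fG a = fG (φ a : G) * x := by
    intro a
    have h2 : x * fG a * x⁻¹ = fG (φ a : G) := DFunLike.congr_fun hhom a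
    rw [← h2]
    group
  let F : HNNExtension G A B φ →* PresentedGroup Q := HNNExtension.lift fG x hx
  let f : Fin (n + 1) → HNNExtension G A B φ :=
    Fin.lastCases HNNExtension.t (fun i => HNNExtension.of (π (FreeGroup.of i)))
  have hfι : ∀ w, FreeGroup.lift f (ι w) = HNNExtension.of (π w) := by
    have : (FreeGroup.lift f).comp ι = HNNExtension.of.comp π := by
      ext i
      simp [ι, f]
    exact fun w => DFunLike.congr_fun this w
  have hfτ : FreeGroup.lift f τ = HNNExtension.t := by simp [τ, f]
  have hrel : ∀ r ∈ Q, FreeGroup.lift f r = 1 := by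
    rintro _ (⟨r, hr, rfl⟩ | ⟨a, -, rfl⟩)
    · rw [hfι]
      have : π r = 1 := by
        change e.symm (PresentedGroup.mk R r) = 1
        rw [PresentedGroup.one_of_mem hr, map_one]
      rw [this, map_one]
    · simp only [rel, map_mul, map_inv, hfι, hfτ]
      rw [hσ, hσ, HNNExtension.equiv_eq_conj, mul_inv_cancel]
  let K : PresentedGroup Q →* HNNExtension G A B φ := PresentedGroup.toGroup hrel
  have hK : ∀ w, K (PresentedGroup.mk Q w) = FreeGroup.lift f w := fun w => rfl
  refine ⟨n + 1, Q, (hR.image _).union (S.finite_toSet.image _),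
    ⟨MonoidHom.toMulEquiv F K ?_ ?_⟩⟩
  · apply HNNExtension.hom_ext
    · ext g
      simp only [MonoidHom.comp_apply, F, HNNExtension.lift_of, MonoidHom.id_apply]
      rw [← hfσ, hK, hfι, hσ]
    · simp only [MonoidHom.comp_apply, F, HNNExtension.lift_t, MonoidHom.id_apply]
      rw [hK, hfτ]
  · apply PresentedGroup.ext
    intro i
    simp only [MonoidHom.comp_apply, MonoidHom.id_apply, K, PresentedGroup.toGroup.of]
    induction i using Fin.lastCases with
    | last => simp [f, F, x, τ, PresentedGroup.of]
    | cast i =>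
      simp only [f, F, Fin.lastCases_castSucc, HNNExtension.lift_of, hfG]
      simp [ι, PresentedGroup.of]
end

section
/- Let F = FreeGroup (Fin 2) be the free group on generators x = FreeGroup.of 0 and y = FreeGroup.of 1, and let t = Multiplicative.ofAdd (1 : ℤ) be the generator of Multiplicative ℤ. In the direct product F × Multiplicative ℤ, let K be the subgroup generated by {(x, 1), (y, t)}, and let i : F →* F × Multiplicative ℤ be the inclusion of the first factor (MonoidHom.inl). Then K ⊓ i.range = Subgroup.map i (Subgroup.normalClosure {x}); that is, the intersection of K with the first factor F is exactly the image in F × Multiplicative ℤ of the normal closure of x in F. -/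
/-- In `F₂ × ℤ` with `F₂` free on `x, y` and `t` the generator of the infinite
cyclic group, the intersection of the subgroup `K = ⟨(x,1), (y,t)⟩` with the
first factor `F₂` is the image of the normal closure of `x` in `F₂`. -/
theorem closure_inf_inl_range_eq_map_normalClosure :
    let x : FreeGroup (Fin 2) := FreeGroup.of 0
    let y : FreeGroup (Fin 2) := FreeGroup.of 1
    let t : Multiplicative ℤ := Multiplicative.ofAdd 1
    let i : FreeGroup (Fin 2) →* FreeGroup (Fin 2) × Multiplicative ℤ :=
      MonoidHom.inl _ _
    let K : Subgroup (FreeGroup (Fin 2) × Multiplicative ℤ) :=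
      Subgroup.closure {(x, 1), (y, t)}
    K ⊓ i.range = Subgroup.map i (Subgroup.normalClosure {x}) := by
  intro x y t i K
  have hxK : (x, (1 : Multiplicative ℤ)) ∈ K := Subgroup.subset_closure (by simp)
  have hyK : (y, t) ∈ K := Subgroup.subset_closure (by simp)
  -- every element of the free group lifts to an element of `K`
  have hlift : ∀ g : FreeGroup (Fin 2), ∃ s : Multiplicative ℤ, (g, s) ∈ K := by
    intro g
    induction g using FreeGroup.induction_on with
    | C1 => exact ⟨1, K.one_mem⟩
    | of j =>
      fin_cases j
      · exact ⟨1, hxK⟩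
      · exact ⟨t, hyK⟩
    | inv_of j h =>
      obtain ⟨s, hs⟩ := h
      exact ⟨s⁻¹, K.inv_mem hs⟩
    | mul a b ha hb =>
      obtain ⟨s, hs⟩ := ha
      obtain ⟨r, hr⟩ := hb
      exact ⟨s * r, K.mul_mem hs hr⟩
  -- modulo the normal closure of `x`, an element `(g, t ^ n)` of `K` has `g = y ^ n`
  have hquot : ∀ p ∈ K, (QuotientGroup.mk' (Subgroup.normalClosure {x})) p.1 =
      (QuotientGroup.mk' (Subgroup.normalClosure {x})) y ^ (Multiplicative.toAdd p.2) := by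
    intro p hp
    induction hp using Subgroup.closure_induction with
    | mem p hp =>
      rcases hp with rfl | rfl
      · have : x ∈ Subgroup.normalClosure {x} := Subgroup.subset_normalClosure rfl
        simpa using this
      · simp [t]
    | one => simp
    | mul a b _ _ ha hb =>
      rw [Prod.fst_mul, Prod.snd_mul, map_mul, ha, hb, toAdd_mul, zpow_add]
    | inv a _ ha =>
      rw [Prod.fst_inv, Prod.snd_inv, map_inv, ha, toAdd_inv, zpow_neg]
  apply le_antisymm
  · rintro _ ⟨hp, g, rfl⟩
    refine ⟨g, ?_, rfl⟩
    have h := hquot _ hp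
    simpa [i] using h
  · have hn : (K.comap i).Normal := by
      refine ⟨fun n hn g => ?_⟩
      obtain ⟨s, hs⟩ := hlift g
      have h := K.mul_mem (K.mul_mem hs hn) (K.inv_mem hs)
      simpa [i] using h
    have hle : Subgroup.normalClosure {x} ≤ K.comap i :=
      Subgroup.normalClosure_le_normal (Set.singleton_subset_iff.mpr hxK)
    rintro _ ⟨g, hg, rfl⟩
    exact ⟨hle hg, g, rfl⟩
end

section
/- In the free group F = FreeGroup (Fin 2) on generators x = FreeGroup.of 0 and y = FreeGroup.of 1, the normal closure of {x} equals the kernel of the group homomorphism F →* Multiplicative ℤ determined by sending x to 1 and y to Multiplicative.ofAdd 1 (i.e., the homomorphism recording the exponent sum of y). -/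
/-- In the free group on generators `x = FreeGroup.of 0` and `y = FreeGroup.of 1`,
the normal closure of `{x}` is the kernel of the homomorphism to `Multiplicative ℤ`
sending `x` to `1` and `y` to `Multiplicative.ofAdd 1` (the `y`-exponent sum). -/
theorem normalClosure_eq_ker_exponentSum :
    Subgroup.normalClosure {FreeGroup.of (0 : Fin 2)} =
      MonoidHom.ker (FreeGroup.lift
        (fun i : Fin 2 => if i = 0 then (1 : Multiplicative ℤ)
          else Multiplicative.ofAdd 1)) := by
  apply le_antisymm
  · apply Subgroup.normalClosure_le_normal
    intro g hg
    rw [Set.mem_singleton_iff] at hg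
    subst hg
    simp [MonoidHom.mem_ker]
  · intro w hw
    set N := Subgroup.normalClosure {FreeGroup.of (0 : Fin 2)} with hN
    have key : (zpowersHom (FreeGroup (Fin 2) ⧸ N)
        (QuotientGroup.mk' N (FreeGroup.of 1))).comp (FreeGroup.lift
        (fun i : Fin 2 => if i = 0 then (1 : Multiplicative ℤ)
          else Multiplicative.ofAdd 1)) = QuotientGroup.mk' N := by
      apply FreeGroup.ext_hom
      intro i
      fin_cases i
      · have h : (QuotientGroup.mk' N) (FreeGroup.of 0) = 1 :=
          (QuotientGroup.eq_one_iff _).2 (Subgroup.subset_normalClosure rfl)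
        simpa using h.symm
      · simp [zpowersHom_apply]
    have h2 := DFunLike.congr_fun key w
    rw [MonoidHom.comp_apply, MonoidHom.mem_ker.1 hw, map_one] at h2
    exact (QuotientGroup.eq_one_iff w).1 h2.symm
end

section
/- In the free group F = FreeGroup (Fin 2) on two generators, the normal closure of the singleton {FreeGroup.of 0} (the first generator x) is not a finitely generated subgroup. -/
/-- The action of the free group on `ℤ`: the first generator acts as the transposition
`(0 1)`, the second one as the shift `n ↦ n + 1`. -/
def actionHom : FreeGroup (Fin 2) →* Equiv.Perm ℤ :=
  FreeGroup.lift ![Equiv.swap 0 1, Equiv.addRight 1]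

/-- Every element of the normal closure of the first generator acts with finite support. -/
lemma finite_support_of_mem (g : FreeGroup (Fin 2))
    (hg : g ∈ Subgroup.normalClosure {FreeGroup.of (0 : Fin 2)}) :
    {n : ℤ | actionHom g n ≠ n}.Finite := by
  unfold Subgroup.normalClosure at hg
  induction hg using Subgroup.closure_induction with
  | mem g hg =>
    rw [Group.mem_conjugatesOfSet_iff] at hg
    obtain ⟨a, rfl, hg⟩ := hg
    obtain ⟨c, rfl⟩ := isConj_iff.1 hg
    refine (Set.toFinite {actionHom c 0, actionHom c 1}).subset ?_
    intro n hn
    by_contra hne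
    simp only [Set.mem_insert_iff, Set.mem_singleton_iff, not_or] at hne
    apply hn
    have h0 : (actionHom c)⁻¹ n ≠ 0 := fun h => hne.1 (by rw [← h]; simp)
    have h1 : (actionHom c)⁻¹ n ≠ 1 := fun h => hne.2 (by rw [← h]; simp)
    have hx : actionHom (FreeGroup.of 0) = Equiv.swap 0 1 := by simp [actionHom]
    rw [map_mul, map_mul, map_inv, hx, Equiv.Perm.mul_apply, Equiv.Perm.mul_apply,
      Equiv.swap_apply_of_ne_of_ne h0 h1]
    simp
  | one => simp
  | mul a b _ _ ha hb =>
    refine (ha.union hb).subset ?_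
    intro n hn
    by_contra hne
    simp only [Set.mem_union, Set.mem_ofPred_eq, not_or, not_not] at hne
    apply hn
    rw [map_mul, Equiv.Perm.mul_apply, hne.2, hne.1]
  | inv a _ ha =>
    refine ha.subset ?_
    intro n hn h
    apply hn
    rw [map_inv, Equiv.Perm.inv_eq_iff_eq, h]

lemma shift_zpow (k n : ℤ) : actionHom (FreeGroup.of 1 ^ k) n = n + k := by
  have hy : actionHom (FreeGroup.of 1) = Equiv.addRight 1 := by simp [actionHom]
  rw [map_zpow, hy]
  simp

/-- In the free group on two generators, the normal closure of the first
generator is not a finitely generated subgroup. -/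
theorem normalClosure_of_generator_not_fg :
    ¬ (Subgroup.normalClosure {FreeGroup.of (0 : Fin 2)}).FG := by
  rintro ⟨S, hS⟩
  have hfin : (⋃ s ∈ S, {n : ℤ | actionHom s n ≠ n}).Finite := by
    refine S.finite_toSet.biUnion fun s hs => finite_support_of_mem s ?_
    rw [← hS]
    exact Subgroup.subset_closure hs
  obtain ⟨k, hk⟩ := hfin.exists_notMem
  simp only [Set.mem_iUnion, Set.mem_ofPred_eq, not_exists, not_not] at hk
  have hfix : ∀ g ∈ Subgroup.closure (S : Set (FreeGroup (Fin 2))), actionHom g k = k := by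
    intro g hg
    induction hg using Subgroup.closure_induction with
    | mem g hg => exact hk g hg
    | one => simp
    | mul a b _ _ ha hb => rw [map_mul, Equiv.Perm.mul_apply, hb, ha]
    | inv a _ ha => rw [map_inv, Equiv.Perm.inv_eq_iff_eq, ha]
  have hmem : FreeGroup.of 1 ^ k * FreeGroup.of 0 * (FreeGroup.of 1 ^ k)⁻¹ ∈
      Subgroup.normalClosure {FreeGroup.of (0 : Fin 2)} :=
    Subgroup.normalClosure_normal.conj_mem _
      (Subgroup.subset_normalClosure (Set.mem_singleton _)) _
  rw [← hS] at hmem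
  have h := hfix _ hmem
  have hx : actionHom (FreeGroup.of 0) = Equiv.swap 0 1 := by simp [actionHom]
  rw [← zpow_neg, map_mul, map_mul, Equiv.Perm.mul_apply, Equiv.Perm.mul_apply,
    shift_zpow, hx, shift_zpow, add_neg_cancel, Equiv.swap_apply_left] at h
  omega
end

section
/- The group FreeGroup (Fin 2) × Multiplicative ℤ does not have the finitely generated intersection property: there exist finitely generated subgroups H and K of FreeGroup (Fin 2) × Multiplicative ℤ such that H ⊓ K is not finitely generated. Specifically, one may take H to be the image of the first-factor inclusion FreeGroup (Fin 2) →* FreeGroup (Fin 2) × Multiplicative ℤ and K to be the subgroup generated by {(x, 1), (y, t)}, where x, y are the free generators and t = Multiplicative.ofAdd 1. -/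
/-- The action of `F₂ × ℤ` on `ℤ` (through the first factor): `x` swaps `0, 1`, `y` shifts. -/
noncomputable def actHom : FreeGroup (Fin 2) × Multiplicative ℤ →* Equiv.Perm ℤ :=
  (FreeGroup.lift ![Equiv.swap (0 : ℤ) 1, Equiv.addRight (1 : ℤ)]).comp (MonoidHom.fst _ _)

theorem bad_finite (g : FreeGroup (Fin 2) × Multiplicative ℤ)
    (hg : g ∈ Subgroup.closure {((FreeGroup.of 0 : FreeGroup (Fin 2)), (1 : Multiplicative ℤ)),
      (FreeGroup.of 1, Multiplicative.ofAdd 1)}) :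
    {n : ℤ | actHom g n ≠ n + Multiplicative.toAdd g.2}.Finite := by
  induction hg using Subgroup.closure_induction with
  | mem g hg =>
    rcases hg with rfl | rfl
    · refine (Set.toFinite {(0 : ℤ), 1}).subset ?_
      intro n hn
      by_contra h
      simp only [Set.mem_insert_iff, Set.mem_singleton_iff, not_or] at h
      apply hn
      simp [actHom, Equiv.swap_apply_of_ne_of_ne h.1 h.2]
    · simp [actHom]
  | one => simp
  | mul g h _ _ ihg ihh =>
    refine (ihh.union (ihg.preimage (actHom h).injective.injOn)).subset ?_
    intro n hn
    by_contra hc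
    simp only [Set.mem_union, Set.mem_preimage, Set.mem_ofPred_eq, not_or, not_not] at hc
    apply hn
    rw [map_mul, Equiv.Perm.mul_apply, hc.2, hc.1, Prod.snd_mul, toAdd_mul]
    ring
  | inv g _ ih =>
    refine (ih.preimage (actHom g⁻¹).injective.injOn).subset ?_
    intro n hn
    by_contra hc
    simp only [Set.mem_preimage, Set.mem_ofPred_eq, not_not] at hc
    apply hn
    rw [map_inv, ← Equiv.Perm.mul_apply, mul_inv_cancel, Equiv.Perm.one_apply] at hc
    rw [map_inv, Prod.snd_inv, toAdd_inv]
    linarith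

/-- `F₂ × ℤ` does not have the finitely generated intersection property:
the image `H` of the first-factor inclusion and the subgroup
`K = ⟨(x,1), (y,t)⟩` are finitely generated, but `H ⊓ K` is not. -/
theorem freeGroup_prod_int_not_fgip :
    let x : FreeGroup (Fin 2) := FreeGroup.of 0
    let y : FreeGroup (Fin 2) := FreeGroup.of 1
    let t : Multiplicative ℤ := Multiplicative.ofAdd 1
    let H : Subgroup (FreeGroup (Fin 2) × Multiplicative ℤ) :=
      (MonoidHom.inl (FreeGroup (Fin 2)) (Multiplicative ℤ)).range
    let K : Subgroup (FreeGroup (Fin 2) × Multiplicative ℤ) :=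
      Subgroup.closure {(x, 1), (y, t)}
    H.FG ∧ K.FG ∧ ¬ (H ⊓ K).FG := by
  intro x y t H K
  refine ⟨?_, ?_, ?_⟩
  · have h : Group.FG (FreeGroup (Fin 2)) := inferInstance
    exact (Group.fg_iff_subgroup_fg _).1 (Group.fg_range _)
  · exact (Subgroup.fg_iff _).2 ⟨_, rfl, Set.toFinite _⟩
  · intro hfg
    obtain ⟨S, hS, hfin⟩ := (Subgroup.fg_iff _).1 hfg
    have hT : (⋃ s ∈ S, {n : ℤ | actHom s n ≠ n}).Finite := by
      refine hfin.biUnion fun s hs => ?_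
      have hm : s ∈ H ⊓ K := hS ▸ Subgroup.subset_closure hs
      obtain ⟨⟨w, rfl⟩, hK⟩ := hm
      simpa using bad_finite _ hK
    obtain ⟨n, hn⟩ := hT.infinite_compl.nonempty
    have hfix : H ⊓ K ≤ (MulAction.stabilizer (Equiv.Perm ℤ) n).comap actHom := by
      rw [← hS, Subgroup.closure_le]
      intro s hs
      by_contra hc
      exact hn (Set.mem_biUnion hs hc)
    have hx : ((x, 1) : FreeGroup (Fin 2) × Multiplicative ℤ) ∈ K :=
      Subgroup.subset_closure (Or.inl rfl)
    have hy : ((y, t) : FreeGroup (Fin 2) × Multiplicative ℤ) ∈ K :=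
      Subgroup.subset_closure (Or.inr rfl)
    have hmem : ((y, t) ^ n * (x, 1) * ((y, t) ^ n)⁻¹ :
        FreeGroup (Fin 2) × Multiplicative ℤ) ∈ H ⊓ K := by
      refine ⟨⟨y ^ n * x * (y ^ n)⁻¹, ?_⟩,
        K.mul_mem (K.mul_mem (K.zpow_mem hy n) hx) (K.inv_mem (K.zpow_mem hy n))⟩
      ext <;> simp
    have h1 := hfix hmem
    rw [Subgroup.mem_comap, MulAction.mem_stabilizer_iff, Equiv.Perm.smul_def, map_mul, map_mul,
      map_inv, Equiv.Perm.mul_apply, Equiv.Perm.mul_apply, map_zpow] at h1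
    have hys : actHom (y, t) = Equiv.addRight (1 : ℤ) := by simp [actHom, y]
    have hxs : actHom (x, 1) = Equiv.swap (0 : ℤ) 1 := by simp [actHom, x]
    rw [hys, hxs, ← Equiv.Perm.eq_inv_iff_eq] at h1
    have h0 : ((Equiv.addRight (1 : ℤ)) ^ n)⁻¹ n = 0 := by
      rw [Equiv.Perm.inv_eq_iff_eq]
      simp
    rw [h0] at h1
    simp at h1
end
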